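/- Let m ≥ 1 and let A^0, A^1, A_0, A_1, A_2 ∈ Mat_m(ℂ) be fixed matrices. For u ∈ ℂ∖{0,1}, t_1 ∈ ℂ∖{0}, t_2 ∈ ℂ, define H_u := Tr[ A_0(A^0/u + A^1/(u−1)) − t_1 A_1(A^0/u^2 + A^1/(u−1)^2) + A_2( t_1^2 A^0/u^3 + t_1^2 A^1/(u−1)^3 − t_2 A^0/u^2 − t_2 A^1/(u−1)^2 ) ], H_1 := Tr[ A_1(A^0/u + A^1/(u−1)) − t_1 A_2(A^0/u^2 + A^1/(u−1)^2) + A_0A_0/(2t_1) − t_2 A_0A_1/t_1^2 − t_2^2 A_0A_2/t_1^3 ], and H_2 := Tr[ A_2(A^0/u + A^1/(u−1)) + A_0A_1/t_1 + t_2 A_0A_2/t_1^2 ]. Then the cross-derivatives vanish identically on (ℂ∖{0,1}) × (ℂ∖{0}) × ℂ: ∂H_u/∂t_1 = ∂H_1/∂u, ∂H_u/∂t_2 = ∂H_2/∂u, and ∂H_2/∂t_1 = ∂H_1/∂t_2. Hence the one-form H_u du + H_1 dt_1 + H_2 dt_2 has symmetric coefficient derivatives and the corresponding isomonodromic τ-function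 is well defined. -/

import Mathlib

/-!
The confluent isomonodromic Hamiltonians for the connection
`A(λ) = A⁰/λ + A¹/(λ−1) + A₀/(λ−u) + (t₁A₁+t₂A₂)/(λ−u)² + t₁²A₂/(λ−u)³`:
their cross-derivatives in the deformation parameters `(u, t₁, t₂)` vanish, so the
isomonodromic τ-function is well defined.
-/

noncomputable section

variable {m : ℕ}

/-- `H_u = Tr[A₀(A⁰/u + A¹/(u−1)) − t₁A₁(A⁰/u² + A¹/(u−1)²)
      + A₂(t₁²A⁰/u³ + t₁²A¹/(u−1)³ − t₂A⁰/u² − t₂A¹/(u−1)²)]`. -/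
def Hu (A0 A1 B0 B1 B2 : Matrix (Fin m) (Fin m) ℂ) (u t₁ t₂ : ℂ) : ℂ :=
  (B0 * (u⁻¹ • A0 + (u - 1)⁻¹ • A1)).trace
    - t₁ * (B1 * ((u ^ 2)⁻¹ • A0 + ((u - 1) ^ 2)⁻¹ • A1)).trace
    + (B2 * ((t₁ ^ 2 / u ^ 3) • A0 + (t₁ ^ 2 / (u - 1) ^ 3) • A1
        - (t₂ / u ^ 2) • A0 - (t₂ / (u - 1) ^ 2) • A1)).trace

/-- `H_1 = Tr[A₁(A⁰/u + A¹/(u−1)) − t₁A₂(A⁰/u² + A¹/(u−1)²)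
      + A₀A₀/(2t₁) − t₂A₀A₁/t₁² − t₂²A₀A₂/t₁³]`. -/
def H1 (A0 A1 B0 B1 B2 : Matrix (Fin m) (Fin m) ℂ) (u t₁ t₂ : ℂ) : ℂ :=
  (B1 * (u⁻¹ • A0 + (u - 1)⁻¹ • A1)).trace
    - t₁ * (B2 * ((u ^ 2)⁻¹ • A0 + ((u - 1) ^ 2)⁻¹ • A1)).trace
    + (B0 * B0).trace / (2 * t₁) - t₂ * (B0 * B1).trace / t₁ ^ 2
    - t₂ ^ 2 * (B0 * B2).trace / t₁ ^ 3

/-- `H_2 = Tr[A₂(A⁰/u + A¹/(u−1)) + A₀A₁/t₁ + t₂A₀A₂/t₁²]`. -/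
def H2 (A0 A1 B0 B1 B2 : Matrix (Fin m) (Fin m) ℂ) (u t₁ t₂ : ℂ) : ℂ :=
  (B2 * (u⁻¹ • A0 + (u - 1)⁻¹ • A1)).trace
    + (B0 * B1).trace / t₁ + t₂ * (B0 * B2).trace / t₁ ^ 2

end

/-- the cross-derivatives of the confluent Hamiltonians vanish identically on
`(ℂ∖{0,1}) × (ℂ∖{0}) × ℂ`: `∂H_u/∂t₁ = ∂H_1/∂u`, `∂H_u/∂t₂ = ∂H_2/∂u`,
`∂H_2/∂t₁ = ∂H_1/∂t₂`.  Hence `H_u du + H_1 dt₁ + H_2 dt₂` has symmetric coefficient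
derivatives and the isomonodromic τ-function is well defined. -/
theorem statement17 (m : ℕ) (hm : 1 ≤ m)
    (A0 A1 B0 B1 B2 : Matrix (Fin m) (Fin m) ℂ)
    (u t₁ t₂ : ℂ) (hu0 : u ≠ 0) (hu1 : u ≠ 1) (ht₁ : t₁ ≠ 0) :
    deriv (fun s : ℂ => Hu A0 A1 B0 B1 B2 u s t₂) t₁
        = deriv (fun s : ℂ => H1 A0 A1 B0 B1 B2 s t₁ t₂) u ∧
    deriv (fun s : ℂ => Hu A0 A1 B0 B1 B2 u t₁ s) t₂
        = deriv (fun s : ℂ => H2 A0 A1 B0 B1 B2 s t₁ t₂) u ∧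
    deriv (fun s : ℂ => H2 A0 A1 B0 B1 B2 u s t₂) t₁
        = deriv (fun s : ℂ => H1 A0 A1 B0 B1 B2 u t₁ s) t₂ := by
  have hv : u - 1 ≠ 0 := sub_ne_zero.mpr hu1
  have i1 : HasDerivAt (fun s : ℂ => s⁻¹) (-(u ^ 2)⁻¹) u := hasDerivAt_inv hu0
  have j1 : HasDerivAt (fun s : ℂ => (s - 1)⁻¹) (-1 / (u - 1) ^ 2) u :=
    ((hasDerivAt_id u).sub_const 1).fun_inv hv
  have i2 : HasDerivAt (fun s : ℂ => (s ^ 2)⁻¹) _ u :=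
    (hasDerivAt_pow 2 u).fun_inv (pow_ne_zero 2 hu0)
  have j2 : HasDerivAt (fun s : ℂ => ((s - 1) ^ 2)⁻¹) _ u :=
    (((hasDerivAt_id u).sub_const 1).fun_pow 2).fun_inv (pow_ne_zero 2 hv)
  have k1 : HasDerivAt (fun s : ℂ => s⁻¹) (-(t₁ ^ 2)⁻¹) t₁ := hasDerivAt_inv ht₁
  have k2 : HasDerivAt (fun s : ℂ => (s ^ 2)⁻¹) _ t₁ :=
    (hasDerivAt_pow 2 t₁).fun_inv (pow_ne_zero 2 ht₁)
  have p1 := hasDerivAt_id' t₁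
  have p2 := hasDerivAt_pow 2 t₁
  have q1 := hasDerivAt_id' t₂
  have q2 := hasDerivAt_pow 2 t₂
  simp only [Hu, H1, H2, mul_add, mul_sub, Matrix.mul_smul, Matrix.trace_add, Matrix.trace_sub,
    Matrix.trace_smul, smul_eq_mul, div_eq_mul_inv]
  generalize (B0 * A0).trace = a0
  generalize (B0 * A1).trace = b0
  generalize (B1 * A0).trace = a1
  generalize (B1 * A1).trace = b1
  generalize (B2 * A0).trace = a2
  generalize (B2 * A1).trace = b2
  generalize (B0 * B0).trace = c0
  generalize (B0 * B1).trace = c1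
  generalize (B0 * B2).trace = c2
  refine ⟨?_, ?_, ?_⟩
  · have L : HasDerivAt (fun s : ℂ => u⁻¹ * a0 + (u - 1)⁻¹ * b0
        - (s * ((u ^ 2)⁻¹ * a1) + s * (((u - 1) ^ 2)⁻¹ * b1))
        + (s ^ 2 * (u ^ 3)⁻¹ * a2 + s ^ 2 * ((u - 1) ^ 3)⁻¹ * b2
          - t₂ * (u ^ 2)⁻¹ * a2 - t₂ * ((u - 1) ^ 2)⁻¹ * b2)) _ t₁ :=
      (((p1.mul_const _).fun_add (p1.mul_const _)).const_sub _).fun_add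
        (((((p2.mul_const _).mul_const _).fun_add
          ((p2.mul_const _).mul_const _)).sub_const _).sub_const _)
    have R : HasDerivAt (fun s : ℂ => s⁻¹ * a1 + (s - 1)⁻¹ * b1
        - (t₁ * ((s ^ 2)⁻¹ * a2) + t₁ * (((s - 1) ^ 2)⁻¹ * b2))
        + c0 * (2 * t₁)⁻¹ - t₂ * c1 * (t₁ ^ 2)⁻¹ - t₂ ^ 2 * c2 * (t₁ ^ 3)⁻¹) _ u :=
      ((((((i1.mul_const _).fun_add (j1.mul_const _)).fun_sub
        (((i2.mul_const _).const_mul _).fun_add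
          ((j2.mul_const _).const_mul _))).add_const _).sub_const _).sub_const _)
    rw [L.deriv, R.deriv]
    simp only [id]
    field_simp
    push_cast
    ring
  · have L : HasDerivAt (fun s : ℂ => u⁻¹ * a0 + (u - 1)⁻¹ * b0
        - (t₁ * ((u ^ 2)⁻¹ * a1) + t₁ * (((u - 1) ^ 2)⁻¹ * b1))
        + (t₁ ^ 2 * (u ^ 3)⁻¹ * a2 + t₁ ^ 2 * ((u - 1) ^ 3)⁻¹ * b2
          - s * (u ^ 2)⁻¹ * a2 - s * ((u - 1) ^ 2)⁻¹ * b2)) _ t₂ :=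
      ((((q1.mul_const _).mul_const _).const_sub _).fun_sub
        ((q1.mul_const _).mul_const _)).const_add _
    have R : HasDerivAt (fun s : ℂ => s⁻¹ * a2 + (s - 1)⁻¹ * b2
        + c1 * t₁⁻¹ + t₂ * c2 * (t₁ ^ 2)⁻¹) _ u :=
      (((i1.mul_const _).fun_add (j1.mul_const _)).add_const _).add_const _
    rw [L.deriv, R.deriv]
    field_simp
    ring
  · have L : HasDerivAt (fun s : ℂ => u⁻¹ * a2 + (u - 1)⁻¹ * b2
        + c1 * s⁻¹ + t₂ * c2 * (s ^ 2)⁻¹) _ t₁ :=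
      ((k1.const_mul _).const_add _).fun_add (k2.const_mul _)
    have R : HasDerivAt (fun s : ℂ => u⁻¹ * a1 + (u - 1)⁻¹ * b1
        - (t₁ * ((u ^ 2)⁻¹ * a2) + t₁ * (((u - 1) ^ 2)⁻¹ * b2))
        + c0 * (2 * t₁)⁻¹ - s * c1 * (t₁ ^ 2)⁻¹ - s ^ 2 * c2 * (t₁ ^ 3)⁻¹) _ t₂ :=
      (((q1.mul_const _).mul_const _).const_sub _).fun_sub ((q2.mul_const _).mul_const _)
    rw [L.deriv, R.deriv]
    field_simp
    push_cast
    ring
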